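/- For any permutation w with no descents at or after position n, the Schubert polynomial satisfies 𝔖_w = Σ_{P ∈ QPD(w)} 𝔉_{wt(P)}. -/

import Mathlib

open scoped Classical

namespace SlidePaper

/-- Sum of the first `i` entries of a weak composition of length `n`. -/
def psum {n : ℕ} (a : Fin n → ℕ) (i : ℕ) : ℕ :=
  ∑ j ∈ Finset.univ.filter (fun j : Fin n => (j : ℕ) < i), a j

/-- `b` dominates `a`: all partial sums of `b` are at least those of `a`. -/
def Dominates {n : ℕ} (b a : Fin n → ℕ) : Prop :=
  ∀ i : Fin (n + 1), psum a i ≤ psum b i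

/-- The flattening of a weak composition: the list of its nonzero entries in order. -/
def flat {n : ℕ} (a : Fin n → ℕ) : List ℕ :=
  (List.ofFn a).filter (fun x => x ≠ 0)

/-- `β` refines `α`: `β` splits into consecutive blocks with sums `α₁, α₂, …`. -/
def Refines (β α : List ℕ) : Prop :=
  ∃ L : List (List ℕ), L.flatten = β ∧ L.map List.sum = α

/-- All weak compositions of length `n` with entries at most `k`. -/
def wcFinset (n k : ℕ) : Finset (Fin n → ℕ) :=
  Fintype.piFinset fun _ => Finset.range (k + 1)

/-- The monomial slide polynomial `𝔐_a`. -/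
noncomputable def slideM {n : ℕ} (a : Fin n → ℕ) : MvPolynomial (Fin n) ℤ :=
  ∑ b ∈ (wcFinset n (∑ i, a i)).filter (fun b => Dominates b a ∧ flat b = flat a),
    MvPolynomial.monomial (Finsupp.equivFunOnFinite.symm b) 1

/-- The fundamental slide polynomial `𝔉_a`. -/
noncomputable def slideF {n : ℕ} (a : Fin n → ℕ) : MvPolynomial (Fin n) ℤ :=
  ∑ b ∈ (wcFinset n (∑ i, a i)).filter (fun b => Dominates b a ∧ Refines (flat b) (flat a)),
    MvPolynomial.monomial (Finsupp.equivFunOnFinite.symm b) 1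

/-- A weak composition is quasi-flat if its nonzero entries occupy consecutive positions. -/
def QuasiFlat {n : ℕ} (a : Fin n → ℕ) : Prop :=
  ∀ i j l : Fin n, i ≤ j → j ≤ l → a i ≠ 0 → a l ≠ 0 → a j ≠ 0

/-- `b` strongly dominates `a`. -/
def StronglyDominates {n : ℕ} (b a : Fin n → ℕ) : Prop :=
  Dominates b a ∧ ∀ c : Fin n → ℕ, Dominates c a → flat c = flat b → Dominates c b

/-- The exponent vector placing the parts of `α` at the positions `i`. -/
noncomputable def placeExp {n : ℕ} (α : List ℕ) (i : Fin α.length → Fin n) : Fin n →₀ ℕ :=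
  ∑ t : Fin α.length, Finsupp.single (i t) (α.get t)

/-- `f` is quasisymmetric in the variables `x_1, …, x_k` (0-indexed: `x_0, …, x_{k-1}`). -/
def IsQuasisymmetricIn {n : ℕ} (k : ℕ) (f : MvPolynomial (Fin n) ℤ) : Prop :=
  ∀ α : List ℕ, (∀ x ∈ α, 0 < x) →
    ∀ i j : Fin α.length → Fin n, StrictMono i → StrictMono j →
      (∀ t, (i t : ℕ) < k) → (∀ t, (j t : ℕ) < k) →
      MvPolynomial.coeff (placeExp α i) f = MvPolynomial.coeff (placeExp α j) f

/-- The monomial quasisymmetric polynomial `M_α(x_1, …, x_k)` inside `ℤ[x_1, …, x_n]`. -/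
noncomputable def Mqs (n k : ℕ) (α : List ℕ) : MvPolynomial (Fin n) ℤ :=
  ∑ i ∈ (Finset.univ : Finset (Fin α.length → Fin n)).filter
      (fun i : Fin α.length → Fin n => StrictMono i ∧ ∀ t, (i t : ℕ) < k),
    ∏ t : Fin α.length, (MvPolynomial.X (i t) : MvPolynomial (Fin n) ℤ) ^ α.get t

/-- The fundamental quasisymmetric polynomial `F_α(x_1, …, x_k)` inside `ℤ[x_1, …, x_n]`. -/
noncomputable def Fqs (n k : ℕ) (α : List ℕ) : MvPolynomial (Fin n) ℤ :=
  ∑ c ∈ (Finset.univ : Finset (Composition α.sum)).filter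
      (fun c => Refines c.blocks α ∧ c.blocks.length ≤ k),
    Mqs n k c.blocks

/-- Place the weak composition `a` (of length `N`) at offset `k` inside length `M`. -/
def shiftComp {N : ℕ} (k M : ℕ) (a : Fin N → ℕ) : Fin M → ℕ :=
  fun i => if h : k ≤ (i : ℕ) ∧ (i : ℕ) - k < N then a ⟨(i : ℕ) - k, h.2⟩ else 0

/-- Spread the values `g` to positions `ι` inside a weak composition of length `n`. -/
def spread {l n : ℕ} (ι : Fin l → Fin n) (g : Fin l → ℕ) : Fin n → ℕ :=
  fun i => ∑ k, if ι k = i then g k else 0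

/-- The monomial quasisymmetric function `M_α` in infinitely many variables. -/
noncomputable def MqsFun (α : List ℕ) : MvPowerSeries ℕ ℤ :=
  fun d => if ∃ i : Fin α.length → ℕ, StrictMono i ∧
      d = ∑ t : Fin α.length, Finsupp.single (i t) (α.get t) then 1 else 0

/-- The fundamental quasisymmetric function `F_α` in infinitely many variables. -/
noncomputable def FqsFun (α : List ℕ) : MvPowerSeries ℕ ℤ :=
  ∑ c ∈ (Finset.univ : Finset (Composition α.sum)).filter (fun c => Refines c.blocks α),
    MqsFun c.blocks

/-- The cells of the Young diagram of `lam` (French notation): row `r` (from the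
bottom, 0-indexed) has `lam.get r` cells. -/
abbrev Cells (lam : List ℕ) := Σ r : Fin lam.length, Fin (lam.get r)

/-- A filling of `lam` with entries in `{1, …, n}` (encoded as `Fin n`) is a semistandard
Young tableau: rows weakly increase left to right, columns strictly increase bottom to top. -/
def IsSSYT {n : ℕ} {lam : List ℕ} (T : Cells lam → Fin n) : Prop :=
  (∀ (r : Fin lam.length) (c c' : Fin (lam.get r)), c ≤ c' → T ⟨r, c⟩ ≤ T ⟨r, c'⟩) ∧
  (∀ (r r' : Fin lam.length) (c' : Fin (lam.get r')) (h : (c' : ℕ) < lam.get r),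
      (r : ℕ) < (r' : ℕ) → T ⟨r, ⟨c', h⟩⟩ < T ⟨r', c'⟩)

/-- The weight of a filling: the `v`-th entry counts the occurrences of the value `v`. -/
def wtT {n : ℕ} {lam : List ℕ} (T : Cells lam → Fin n) : Fin n → ℕ :=
  fun v => (Finset.univ.filter (fun x : Cells lam => T x = v)).card

/-- A filling is quasi-Yamanouchi if for every value `v > 1`, the leftmost occurrence of `v`
lies weakly left of some occurrence of `v - 1`. -/
def IsQY {n : ℕ} {lam : List ℕ} (T : Cells lam → Fin n) : Prop :=
  ∀ (v : Fin n) (x : Cells lam), T x = v → 0 < (v : ℕ) →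
    (∀ y : Cells lam, T y = v → (x.2 : ℕ) ≤ (y.2 : ℕ)) →
    ∃ z : Cells lam, (T z : ℕ) + 1 = (v : ℕ) ∧ (x.2 : ℕ) ≤ (z.2 : ℕ)

/-- The Schur polynomial `s_lam(x_1, …, x_n)` as the generating function of
semistandard Young tableaux. -/
noncomputable def schurPoly (n : ℕ) (lam : List ℕ) : MvPolynomial (Fin n) ℤ :=
  ∑ T ∈ (Finset.univ : Finset (Cells lam → Fin n)).filter (fun T => IsSSYT T),
    MvPolynomial.monomial (Finsupp.equivFunOnFinite.symm (wtT T)) 1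

/-- One destandardization step on fillings: for some value `v` occurring in `T` whose
leftmost occurrence is strictly right of every occurrence of `v - 1`, every `v` is
decremented to `v - 1`. -/
def TabStep {n : ℕ} {lam : List ℕ} (T T' : Cells lam → Fin n) : Prop :=
  ∃ v : Fin n, 0 < (v : ℕ) ∧ (∃ x, T x = v) ∧
    (∀ x y : Cells lam, T x = v → (T y : ℕ) + 1 = (v : ℕ) → (y.2 : ℕ) < (x.2 : ℕ)) ∧
    ∀ x : Cells lam, (T' x : ℕ) = if T x = v then (v : ℕ) - 1 else (T x : ℕ)

/-- The reading word of a set of crosses: rows are read from top to bottom, each row from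
left to right, the cross in (0-indexed) row `i` and column `j` recording the letter `i + j`
(representing the simple transposition swapping `i + j` and `i + j + 1` of `{0, 1, 2, …}`). -/
def readWord (P : Finset (ℕ × ℕ)) : List ℕ :=
  ((List.range (P.sup Prod.fst + 1)).reverse).flatMap
    (fun i => ((List.range (P.sup Prod.snd + 1)).filter (fun j => decide ((i, j) ∈ P))).map
      (fun j => i + j))

/-- The permutation `s_{i_ℓ} ⋯ s_{i_1}` associated to the word `(i_1, …, i_ℓ)`,
where `s_k` swaps `k` and `k + 1`. -/
def wordPerm (l : List ℕ) : Equiv.Perm ℕ :=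
  ((l.map (fun k => Equiv.swap k (k + 1))).reverse).prod

/-- A word is reduced if no shorter word has the same product. -/
def IsReducedWord (l : List ℕ) : Prop :=
  ∀ l' : List ℕ, wordPerm l' = wordPerm l → l.length ≤ l'.length

/-- `P` is a reduced pipe dream of shape `w`: the pipes trace out `w` and no two pipes
cross more than once, equivalently the reading word of `P` is a reduced word for `w`. -/
def IsPD (w : Equiv.Perm ℕ) (P : Finset (ℕ × ℕ)) : Prop :=
  wordPerm (readWord P) = w ∧ IsReducedWord (readWord P)

/-- `P` is a quasi-Yamanouchi pipe dream of shape `w`: for every row, the westernmost cross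
is in the first column or lies weakly west of some cross in the row above. -/
def IsQPD (w : Equiv.Perm ℕ) (P : Finset (ℕ × ℕ)) : Prop :=
  IsPD w P ∧ ∀ i j : ℕ, (i, j) ∈ P → (∀ j', (i, j') ∈ P → j ≤ j') →
    (j = 0 ∨ ∃ j', (i + 1, j') ∈ P ∧ j ≤ j')

/-- One destandardization step on pipe dreams: a row with no cross in the first column,
all of whose crosses lie strictly east of every cross in the row above, has all its
crosses moved one step northwest. -/
def PDStep (P P' : Finset (ℕ × ℕ)) : Prop :=
  ∃ r : ℕ, (∃ j, (r, j) ∈ P) ∧ (r, 0) ∉ P ∧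
    (∀ j j', (r, j) ∈ P → (r + 1, j') ∈ P → j' < j) ∧
    P' = P.filter (fun p => p.1 ≠ r) ∪
      (P.filter (fun p => p.1 = r)).image (fun p => (r + 1, p.2 - 1))

/-- The number of crosses of `P` in (0-indexed) row `i`. -/
def rowWt (P : Finset (ℕ × ℕ)) (i : ℕ) : ℕ := (P.filter (fun p => p.1 = i)).card

/-- The weight of a pipe dream, as a weak composition of length `n`. -/
def wtFin (n : ℕ) (P : Finset (ℕ × ℕ)) : Fin n → ℕ := fun i => rowWt P (i : ℕ)

/-- The flattened weight of a pipe dream: the list of nonzero row counts, bottom row first. -/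
def flatWt (P : Finset (ℕ × ℕ)) : List ℕ :=
  ((List.range (P.sup Prod.fst + 1)).map (rowWt P)).filter (fun x => x ≠ 0)

/-- The Schubert polynomial of `w` in the variables `x_1, …, x_n`, as the generating
function of reduced pipe dreams of shape `w`. -/
noncomputable def SchubertPoly (n : ℕ) (w : Equiv.Perm ℕ) : MvPolynomial (Fin n) ℤ :=
  ∑ᶠ P ∈ {P : Finset (ℕ × ℕ) | IsPD w P},
    MvPolynomial.monomial (Finsupp.equivFunOnFinite.symm (wtFin n P)) 1

/-- The Lehmer code of `w` (0-indexed): `lehmer w i` counts `j > i` with `w j < w i`. -/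
noncomputable def lehmer (w : Equiv.Perm ℕ) (i : ℕ) : ℕ :=
  Set.ncard {j : ℕ | i < j ∧ w j < w i}

/-- The Lehmer code of `w` as a weak composition of length `n`. -/
noncomputable def lehmerFin (n : ℕ) (w : Equiv.Perm ℕ) : Fin n → ℕ :=
  fun i => lehmer w (i : ℕ)

/-- The number of inversions of `w`. -/
noncomputable def invCount (w : Equiv.Perm ℕ) : ℕ :=
  Set.ncard {p : ℕ × ℕ | p.1 < p.2 ∧ w p.2 < w p.1}

/-- The largest entry of the Lehmer code of `w`. -/
noncomputable def maxLehmer (w : Equiv.Perm ℕ) : ℕ :=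
  sSup (Set.range (lehmer w))

/-- The (0-indexed) position of the first descent of `w`. -/
noncomputable def firstDescent (w : Equiv.Perm ℕ) : ℕ :=
  sInf {i : ℕ | w (i + 1) < w i}

/-- `δ(w) = 1` if every position attaining `max(L(w))` is at or before the first descent,
and `δ(w) = 0` otherwise. -/
noncomputable def delta (w : Equiv.Perm ℕ) : ℤ :=
  if ∀ i : ℕ, lehmer w i = maxLehmer w → i ≤ firstDescent w then 1 else 0

/-- `η(w) = inv(w) − max(L(w)) + δ(w) − min{i : w_i > w_{i+1}}`. -/
noncomputable def eta (w : Equiv.Perm ℕ) : ℤ :=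
  (invCount w : ℤ) - (maxLehmer w : ℤ) + delta w - ((firstDescent w : ℤ) + 1)

/-- The decomposition of a list into maximal strictly increasing runs. -/
def runsStrict : List ℕ → List (List ℕ)
  | [] => []
  | x :: rest =>
    match runsStrict rest, rest with
    | r :: rs, y :: _ => if x < y then (x :: r) :: rs else [x] :: r :: rs
    | _, _ => [[x]]

/-- The descent composition of a word: lengths of its maximal increasing runs, a new run
beginning whenever a letter is followed by a weakly smaller letter. -/
def desStrict (l : List ℕ) : List ℕ := (runsStrict l).map List.length

/-- The decomposition of a list into maximal weakly increasing runs. -/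
def runsWeak : List ℕ → List (List ℕ)
  | [] => []
  | x :: rest =>
    match runsWeak rest, rest with
    | r :: rs, y :: _ => if x ≤ y then (x :: r) :: rs else [x] :: r :: rs
    | _, _ => [[x]]

/-- The descent composition of a word: the lengths of its maximal weakly increasing runs. -/
def desComp (l : List ℕ) : List ℕ := (runsWeak l).map List.length

/-- The permutation `1^m × w`, fixing `0, …, m-1` and acting by `w` shifted by `m` above. -/
def shiftPerm (m : ℕ) (w : Equiv.Perm ℕ) : Equiv.Perm ℕ where
  toFun i := if i < m then i else w (i - m) + m
  invFun i := if i < m then i else w.symm (i - m) + m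
  left_inv i := by
    dsimp only
    by_cases h : i < m
    · simp [h]
    · have h2 : ¬ (w (i - m) + m < m) := by omega
      rw [if_neg h, if_neg h2, Nat.add_sub_cancel, Equiv.symm_apply_apply]
      omega
  right_inv i := by
    dsimp only
    by_cases h : i < m
    · simp [h]
    · have h2 : ¬ (w.symm (i - m) + m < m) := by omega
      rw [if_neg h, if_neg h2, Nat.add_sub_cancel, Equiv.apply_symm_apply]
      omega

/-- The quasi-shuffle product of two (strong) compositions, as a multiset of compositions. -/
def qShuffle : List ℕ → List ℕ → Multiset (List ℕ)
  | [], β => {β}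
  | α, [] => {α}
  | a :: α, b :: β =>
      ((qShuffle α (b :: β)).map (a :: ·)) + ((qShuffle (a :: α) β).map (b :: ·)) +
        ((qShuffle α β).map ((a + b) :: ·))
termination_by α β => α.length + β.length
decreasing_by all_goals (simp only [List.length_cons]; omega)

def shuffles : List ℕ → List ℕ → Multiset (List ℕ)
  | [], B => {B}
  | A, [] => {A}
  | x :: A, y :: B =>
      ((shuffles A (y :: B)).map (x :: ·)) + ((shuffles (x :: A) B).map (y :: ·))
termination_by A B => A.length + B.length
decreasing_by all_goals (simp only [List.length_cons]; omega)

/-- The word `(2n-1)^{a_1} (2n-3)^{a_2} ⋯ 1^{a_n}` associated to a weak composition `a`. -/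
def wordA {n : ℕ} (a : Fin n → ℕ) : List ℕ :=
  (List.ofFn (fun i : Fin n => List.replicate (a i) (2 * n - 2 * (i : ℕ) - 1))).flatten

/-- The word `(2n)^{b_1} (2n-2)^{b_2} ⋯ 2^{b_n}` associated to a weak composition `b`. -/
def wordB {n : ℕ} (b : Fin n → ℕ) : List ℕ :=
  (List.ofFn (fun i : Fin n => List.replicate (b i) (2 * n - 2 * (i : ℕ)))).flatten

/-- A list (padded with trailing zeros) dominates a weak composition of length `n`. -/
def DominatesList {n : ℕ} (l : List ℕ) (a : Fin n → ℕ) : Prop :=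
  ∀ i : Fin (n + 1), psum a (i : ℕ) ≤ ((l.take (i : ℕ)).sum)

/-- The number of letters of the `A`-word (the odd letters) in the `k`-th weakly
increasing run of `C`. -/
def runCountA (C : List ℕ) (k : Fin (runsWeak C).length) : ℕ :=
  (((runsWeak C).get k).filter (fun z => z % 2 = 1)).length

/-- The number of letters of the `B`-word (the even letters) in the `k`-th weakly
increasing run of `C`. -/
def runCountB (C : List ℕ) (k : Fin (runsWeak C).length) : ℕ :=
  (((runsWeak C).get k).filter (fun z => z % 2 = 0)).length

/-- The length of the `k`-th weakly increasing run of `C`. -/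
def runLen (C : List ℕ) (k : Fin (runsWeak C).length) : ℕ :=
  ((runsWeak C).get k).length

/-- `c = bump_{(a,b)}(C)`: the unique weak composition of length `n` obtained by inserting
zero parts into `Des(C)` so that the correspondingly placed `Des_A` and `Des_B` dominate
`a` and `b`, minimal in dominance order among all such insertions. -/
def IsBumpS {n : ℕ} (a b : Fin n → ℕ) (C : List ℕ) (c : Fin n → ℕ) : Prop :=
  ∃ ι : Fin (runsWeak C).length → Fin n, StrictMono ι ∧
    c = spread ι (runLen C) ∧
    Dominates (spread ι (runCountA C)) a ∧ Dominates (spread ι (runCountB C)) b ∧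
    ∀ ι' : Fin (runsWeak C).length → Fin n, StrictMono ι' →
      Dominates (spread ι' (runCountA C)) a → Dominates (spread ι' (runCountB C)) b →
      Dominates (spread ι' (runLen C)) c

/-- The multiplicity `[c ∣ a ⧢ b]` of `c` in the slide product of `a` and `b`: the number of
shuffles `C` of the words of `a` and `b` lying in the shuffle set `SS(a,b)` with
`bump_{(a,b)}(C) = c`. -/
noncomputable def slideMult {n : ℕ} (a b c : Fin n → ℕ) : ℕ :=
  Multiset.card ((shuffles (wordA a) (wordB b)).filter
    (fun C => DominatesList ((runsWeak C).map
        (fun r => (r.filter (fun z => z % 2 = 1)).length)) a ∧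
      DominatesList ((runsWeak C).map (fun r => (r.filter (fun z => z % 2 = 0)).length)) b ∧
      IsBumpS a b C c))

/-- Membership in the quasi-shuffle set `QSS(a,b)`: a pair `(γ_a, γ_b)` of weak compositions
of a common length at most `n` with `γ_a ≥ a`, `flat(γ_a) = flat(a)`, `γ_b ≥ b`,
`flat(γ_b) = flat(b)` (after padding with trailing zeros), and all entries of
`γ_a + γ_b` positive. -/
def InQSS {n : ℕ} (a b : Fin n → ℕ) (x : (l : ℕ) × (Fin l → ℕ) × (Fin l → ℕ)) : Prop :=
  x.1 ≤ n ∧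
  Dominates (shiftComp 0 n x.2.1) a ∧ flat x.2.1 = flat a ∧
  Dominates (shiftComp 0 n x.2.2) b ∧ flat x.2.2 = flat b ∧
  ∀ k : Fin x.1, 0 < x.2.1 k + x.2.2 k

/-- `c = bump_{(a,b)}(γ_a, γ_b)`: the unique weak composition `c` of length `n` with
`flat(c) = γ_a + γ_b` whose decomposition `c = c_a + c_b` satisfies `c_a ≥ a` and
`c_b ≥ b`, minimal in dominance order among all such compositions. -/
def IsBumpQ {n : ℕ} (a b : Fin n → ℕ) (x : (l : ℕ) × (Fin l → ℕ) × (Fin l → ℕ))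
    (c : Fin n → ℕ) : Prop :=
  ∃ ι : Fin x.1 → Fin n, StrictMono ι ∧
    c = spread ι (fun k => x.2.1 k + x.2.2 k) ∧
    Dominates (spread ι x.2.1) a ∧ Dominates (spread ι x.2.2) b ∧
    ∀ ι' : Fin x.1 → Fin n, StrictMono ι' →
      Dominates (spread ι' x.2.1) a → Dominates (spread ι' x.2.2) b →
      Dominates (spread ι' (fun k => x.2.1 k + x.2.2 k)) c

/-- The multiplicity `[c ∣ a ⧻ b]` of `c` in the quasi-slide product of `a` and `b`: the
number of pairs in the quasi-shuffle set `QSS(a,b)` whose bump is `c`. -/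
noncomputable def qsMult {n : ℕ} (a b c : Fin n → ℕ) : ℕ :=
  Nat.card {x : (l : ℕ) × (Fin l → ℕ) × (Fin l → ℕ) // InQSS a b x ∧ IsBumpQ a b x c}

/-- The Stanley symmetric function `S_w`. -/
noncomputable def StanleySym (w : Equiv.Perm ℕ) : MvPowerSeries ℕ ℤ :=
  ∑ᶠ l ∈ {l : List ℕ | wordPerm l = w ∧ IsReducedWord l}, FqsFun (desStrict l)

/-!
Fix a reduced word `l` of `w`. The pipe dreams with reading word `l` are the ways of placing the
letters of `l` in rows `r 0 ≥ r 1 ≥ ⋯`, each letter being an upper bound for its row, with a strict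
drop of the row at every weak descent of `l`. If there is such a sequence at all, there is a
pointwise largest one, chosen greedily, and it gives the unique quasi-Yamanouchi pipe dream `Q` with
reading word `l`. Since the greedy sequence drops only at weak descents, the others are exactly the
weakly decreasing sequences that lie below it and drop wherever it drops. A weakly decreasing
sequence is determined by its weight; lying below the greedy sequence says that its weight dominates
`wt Q`, and dropping wherever it drops says that the flattened weight refines that of `Q`. So the
pipe dreams with reading word `l` generate `𝔉_{wt Q}`, and summing over the reduced words of `w`
gives the theorem.
-/

/-! ### Words and descents -/

theorem wordPerm_cons (k : ℕ) (l : List ℕ) :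
    wordPerm (k :: l) = wordPerm l * Equiv.swap k (k + 1) := by
  simp [wordPerm]

theorem exists_forall_wordPerm_eq (l : List ℕ) : ∃ N, ∀ i, N ≤ i → wordPerm l i = i := by
  induction l with
  | nil => exact ⟨0, fun i _ => rfl⟩
  | cons k l ih =>
    obtain ⟨N, hN⟩ := ih
    refine ⟨max N (k + 2), fun i hi => ?_⟩
    rw [wordPerm_cons, Equiv.Perm.mul_apply,
      Equiv.swap_apply_of_ne_of_ne (by omega) (by omega), hN i (by omega)]

theorem swap_lt_swap_or {a b : ℕ} (m : ℕ) (hab : a < b) :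
    Equiv.swap m (m + 1) a < Equiv.swap m (m + 1) b ∨ (a = m ∧ b = m + 1) := by
  simp only [Equiv.swap_apply_def]
  split_ifs <;> omega

/-- The strong exchange condition, for words that need not be reduced. -/
theorem exists_wordPerm_eq_mul_swap {l : List ℕ} {a b : ℕ} (hab : a < b)
    (hinv : wordPerm l b < wordPerm l a) :
    ∃ l' : List ℕ, l'.length + 1 = l.length ∧ wordPerm l' = wordPerm l * Equiv.swap a b := by
  induction l generalizing a b with
  | nil => exact absurd hinv hab.not_gt
  | cons m t ih =>
    rcases swap_lt_swap_or m hab with hlt | ⟨rfl, rfl⟩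
    · obtain ⟨t', hlen, ht'⟩ := ih hlt (by simpa [wordPerm_cons] using hinv)
      refine ⟨m :: t', by rw [List.length_cons, List.length_cons, hlen], ?_⟩
      rw [wordPerm_cons, wordPerm_cons, ht', mul_assoc, mul_assoc, ← Equiv.mul_swap_eq_swap_mul]
    · exact ⟨t, rfl, by rw [wordPerm_cons, mul_assoc, Equiv.swap_mul_self, mul_one]⟩

namespace IsReducedWord

theorem tail {k : ℕ} {l : List ℕ} (h : IsReducedWord (k :: l)) : IsReducedWord l := by
  intro l' hl'
  have hlen := h (k :: l') (by rw [wordPerm_cons, wordPerm_cons, hl'])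
  simpa using hlen

theorem descent {k : ℕ} {l : List ℕ} (h : IsReducedWord (k :: l)) :
    wordPerm (k :: l) (k + 1) < wordPerm (k :: l) k := by
  by_contra hasc
  have hne : wordPerm (k :: l) k ≠ wordPerm (k :: l) (k + 1) :=
    (wordPerm (k :: l)).injective.ne k.lt_succ_self.ne
  have hinv : wordPerm l (k + 1) < wordPerm l k := by
    simpa [wordPerm_cons] using lt_of_le_of_ne (not_lt.1 hasc) hne
  obtain ⟨l', hlen, hl'⟩ := exists_wordPerm_eq_mul_swap k.lt_succ_self hinv
  have hle := h l' (by rw [hl', wordPerm_cons])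
  rw [List.length_cons] at hle
  omega

theorem isChain_ne {l : List ℕ} (h : IsReducedWord l) : l.IsChain (· ≠ ·) := by
  induction l with
  | nil => exact List.isChain_nil
  | cons k t ih =>
    cases t with
    | nil => exact List.isChain_singleton k
    | cons m t =>
      refine List.isChain_cons_cons.2 ⟨?_, ih h.tail⟩
      rintro rfl
      have hlen := h t (by simp [wordPerm_cons, mul_assoc])
      simp only [List.length_cons] at hlen
      omega

theorem add_one_lt_of_mem {N : ℕ} {l : List ℕ} (h : IsReducedWord l)
    (hfix : ∀ i, N ≤ i → wordPerm l i = i) {k : ℕ} (hk : k ∈ l) : k + 1 < N := by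
  induction l with
  | nil => exact absurd hk List.not_mem_nil
  | cons m t ih =>
    have hm : m + 1 < N := by
      by_contra hle
      have hdesc := h.descent
      rw [hfix (m + 1) (not_lt.1 hle)] at hdesc
      have := (wordPerm (m :: t)).injective (hfix _ ((not_lt.1 hle).trans hdesc.le))
      omega
    have ht : ∀ i, N ≤ i → wordPerm t i = i := by
      intro i hi
      have hi' := hfix i hi
      rwa [wordPerm_cons, Equiv.Perm.mul_apply,
        Equiv.swap_apply_of_ne_of_ne (by omega) (by omega)] at hi'
    rcases List.mem_cons.1 hk with rfl | hk
    · exact hm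
    · exact ih h.tail ht hk

end IsReducedWord

/-! ### The reading order on crosses -/

/-- The order in which `readWord` visits the crosses: rows from top to bottom, each row from left
to right. -/
def ReadBefore (x y : ℕ × ℕ) : Prop := y.1 < x.1 ∨ (x.1 = y.1 ∧ x.2 < y.2)

/-- The crosses of `P` in reading order, so that `readWord P` lists their letters. -/
def readCells (P : Finset (ℕ × ℕ)) : List (ℕ × ℕ) :=
  ((List.range (P.sup Prod.fst + 1)).reverse).flatMap
    (fun i => ((List.range (P.sup Prod.snd + 1)).filter (fun j => decide ((i, j) ∈ P))).map
      (fun j => (i, j)))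

/-- The sequence of the rows of the crosses of `P` in reading order, padded with zeros. -/
def rows (P : Finset (ℕ × ℕ)) (p : ℕ) : ℕ := ((readCells P).getD p (0, 0)).1

theorem readWord_eq_map (P : Finset (ℕ × ℕ)) :
    readWord P = (readCells P).map (fun x => x.1 + x.2) := by
  simp [readWord, readCells, List.map_flatMap, Function.comp_def]

theorem mem_readCells {P : Finset (ℕ × ℕ)} {x : ℕ × ℕ} : x ∈ readCells P ↔ x ∈ P := by
  obtain ⟨i, j⟩ := x
  simp only [readCells, List.mem_flatMap, List.mem_reverse, List.mem_range, List.mem_map,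
    List.mem_filter, decide_eq_true_eq, Prod.mk.injEq]
  constructor
  · rintro ⟨_, _, _, ⟨_, h⟩, rfl, rfl⟩
    exact h
  · intro h
    exact ⟨i, Nat.lt_succ_of_le (Finset.le_sup (f := Prod.fst) h), j,
      ⟨Nat.lt_succ_of_le (Finset.le_sup (f := Prod.snd) h), h⟩, rfl, rfl⟩

theorem pairwise_readCells (P : Finset (ℕ × ℕ)) : (readCells P).Pairwise ReadBefore := by
  rw [readCells, List.pairwise_flatMap]
  constructor
  · intro i _
    rw [List.pairwise_map]
    exact (List.pairwise_lt_range.filter _).imp fun h => Or.inr ⟨rfl, h⟩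
  · rw [List.pairwise_reverse]
    refine List.pairwise_lt_range.imp fun hlt x hx y hy => ?_
    obtain ⟨_, _, rfl⟩ := List.mem_map.1 hx
    obtain ⟨_, _, rfl⟩ := List.mem_map.1 hy
    exact Or.inl hlt

theorem readCells_eq_of_pairwise {P : Finset (ℕ × ℕ)} {L : List (ℕ × ℕ)}
    (hL : L.Pairwise ReadBefore) (hP : ∀ x, x ∈ L ↔ x ∈ P) : readCells P = L := by
  have hne : ∀ {x y : ℕ × ℕ}, ReadBefore x y → x ≠ y := by
    rintro x y h rfl
    simp [ReadBefore] at h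
  refine List.Perm.eq_of_pairwise (le := ReadBefore) ?_ (pairwise_readCells P) hL ?_
  · intro x y _ _ hxy hyx
    unfold ReadBefore at hxy hyx
    omega
  · refine (List.perm_ext_iff_of_nodup ((pairwise_readCells P).imp hne) (hL.imp hne)).2 ?_
    intro x
    rw [mem_readCells, hP]

theorem length_readCells (P : Finset (ℕ × ℕ)) : (readCells P).length = (readWord P).length := by
  rw [readWord_eq_map, List.length_map]

theorem getElem_readCells {P : Finset (ℕ × ℕ)} {p : ℕ} (hp : p < (readCells P).length) :
    (readCells P)[p].1 = rows P p ∧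
      (readCells P)[p].1 + (readCells P)[p].2 = (readWord P).getD p 0 := by
  constructor
  · rw [rows, List.getD_eq_getElem _ _ hp]
  · rw [List.getD_eq_getElem _ _ (length_readCells P ▸ hp)]
    simp only [readWord_eq_map, List.getElem_map]

/-! ### Compatible sequences -/

/-- `r` is a compatible sequence for the word `l` (Billey–Jockusch–Stanley, in our reading order):
placing the `p`-th letter in row `r p` gives a set of crosses with reading word `l`. Only the
values at `p < l.length` matter. -/
structure IsCompatible (l : List ℕ) (r : ℕ → ℕ) : Prop where
  antitoneOn : AntitoneOn r (Set.Iio l.length)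
  le_letter : ∀ p, p < l.length → r p ≤ l.getD p 0
  lt_of_descent : ∀ p, p + 1 < l.length → l.getD (p + 1) 0 ≤ l.getD p 0 → r (p + 1) < r p

/-- The set of crosses in which the `p`-th letter of `l` is placed in row `r p`. -/
def ofRows (l : List ℕ) (r : ℕ → ℕ) : Finset (ℕ × ℕ) :=
  (Finset.range l.length).image fun p => (r p, l.getD p 0 - r p)

theorem mem_ofRows {l : List ℕ} {r : ℕ → ℕ} {i j : ℕ} :
    (i, j) ∈ ofRows l r ↔ ∃ p, p < l.length ∧ r p = i ∧ l.getD p 0 - r p = j := by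
  simp only [ofRows, Finset.mem_image, Finset.mem_range, Prod.mk.injEq]

theorem ofRows_congr {l : List ℕ} {r s : ℕ → ℕ} (h : ∀ p, p < l.length → r p = s p) :
    ofRows l r = ofRows l s :=
  Finset.image_congr fun p hp => by simp only [h p (by simpa using hp)]

theorem isCompatible_rows (P : Finset (ℕ × ℕ)) : IsCompatible (readWord P) (rows P) := by
  have hcell {p : ℕ} (hp : p < (readWord P).length) :=
    getElem_readCells (P := P) (p := p) (by rwa [length_readCells])
  have hlt {p q : ℕ} (hpq : p < q) (hq : q < (readWord P).length) :=
    List.pairwise_iff_getElem.1 (pairwise_readCells P) p q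
      (by rw [length_readCells]; omega) (by rwa [length_readCells]) hpq
  constructor
  · intro p hp q hq hpq
    rcases hpq.eq_or_lt with rfl | hpq
    · exact le_rfl
    · have hbefore := hlt hpq hq
      rw [← (hcell hp).1, ← (hcell hq).1]
      unfold ReadBefore at hbefore
      omega
  · intro p hp
    have := hcell hp
    omega
  · intro p hp hdesc
    have hbefore := hlt (Nat.lt_add_one p) hp
    have hcp := hcell (Nat.lt_of_succ_lt hp)
    have hcq := hcell hp
    unfold ReadBefore at hbefore
    omega

theorem ofRows_rows (P : Finset (ℕ × ℕ)) : ofRows (readWord P) (rows P) = P := by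
  ext ⟨i, j⟩
  rw [mem_ofRows, ← mem_readCells, List.mem_iff_getElem, ← length_readCells]
  refine exists_congr fun p => ?_
  rw [← exists_prop]
  refine exists_congr fun hp => ?_
  have := getElem_readCells hp
  rw [Prod.ext_iff]
  omega

namespace IsCompatible

variable {l : List ℕ} {r : ℕ → ℕ} {p q : ℕ}

theorem add_le_of_row_eq (h : IsCompatible l r) (hpq : p ≤ q) (hq : q < l.length)
    (hrow : r p = r q) : l.getD p 0 + (q - p) ≤ l.getD q 0 := by
  induction q, hpq using Nat.le_induction with
  | base => simp
  | succ q hpq ih =>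
    have hstep : r (q + 1) ≤ r q := h.antitoneOn (Nat.lt_of_succ_lt hq) hq q.le_succ
    have hle : r q ≤ r p :=
      h.antitoneOn (hpq.trans_lt (Nat.lt_of_succ_lt hq)) (Nat.lt_of_succ_lt hq) hpq
    have hasc : ¬ l.getD (q + 1) 0 ≤ l.getD q 0 := fun hdesc => by
      have := h.lt_of_descent q hq hdesc
      omega
    have := ih (Nat.lt_of_succ_lt hq) (by omega)
    omega

theorem readBefore (h : IsCompatible l r) (hpq : p < q) (hq : q < l.length) :
    ReadBefore (r p, l.getD p 0 - r p) (r q, l.getD q 0 - r q) := by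
  have hp : p < l.length := hpq.trans hq
  rcases (h.antitoneOn hp hq hpq.le).eq_or_lt with heq | hlt
  · have hadd := h.add_le_of_row_eq hpq.le hq heq.symm
    have := h.le_letter p hp
    exact Or.inr ⟨heq.symm, by dsimp only; omega⟩
  · exact Or.inl hlt

theorem readCells_ofRows (h : IsCompatible l r) :
    readCells (ofRows l r) = (List.range l.length).map fun p => (r p, l.getD p 0 - r p) := by
  refine readCells_eq_of_pairwise ?_ fun x => ?_
  · rw [List.pairwise_map]
    exact List.pairwise_lt_range.imp_of_mem fun _ hq hpq =>
      h.readBefore hpq (List.mem_range.1 hq)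
  · simp only [ofRows, List.mem_map, List.mem_range, Finset.mem_image, Finset.mem_range]

theorem readWord_ofRows (h : IsCompatible l r) : readWord (ofRows l r) = l := by
  rw [readWord_eq_map, h.readCells_ofRows, List.map_map]
  refine List.ext_getElem (by simp) fun p _ hp => ?_
  have hle := h.le_letter p hp
  rw [List.getD_eq_getElem _ _ hp] at hle
  simp only [List.getElem_map, List.getElem_range, Function.comp_apply,
    List.getD_eq_getElem _ _ hp]
  omega

end IsCompatible

/-! ### Destandardization -/

/-- The pointwise largest candidate for a compatible sequence of the word `l`. At a
position of `l` the subtraction truncates only if `l` has no compatible sequence at all. -/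
def greedyRows (l : List ℕ) : ℕ → ℕ
  | 0 => l.getD 0 0
  | p + 1 =>
    if l.getD (p + 1) 0 ≤ l.getD p 0 then min (l.getD (p + 1) 0) (greedyRows l p - 1)
    else greedyRows l p

theorem greedyRows_le_letter (l : List ℕ) (p : ℕ) : greedyRows l p ≤ l.getD p 0 := by
  induction p with
  | zero => exact le_rfl
  | succ p ih =>
    rw [greedyRows]
    split_ifs <;> omega

theorem descent_of_greedyRows_lt {l : List ℕ} {p : ℕ}
    (hlt : greedyRows l (p + 1) < greedyRows l p) : l.getD (p + 1) 0 ≤ l.getD p 0 := by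
  by_contra hasc
  rw [greedyRows, if_neg hasc] at hlt
  exact lt_irrefl _ hlt

namespace IsCompatible

variable {l : List ℕ} {r : ℕ → ℕ} {p : ℕ}

theorem succ_le (h : IsCompatible l r) (hp : p + 1 < l.length) : r (p + 1) ≤ r p :=
  h.antitoneOn (Nat.lt_of_succ_lt hp) hp p.le_succ

theorem le_greedyRows (h : IsCompatible l r) (hp : p < l.length) : r p ≤ greedyRows l p := by
  induction p with
  | zero => exact h.le_letter 0 hp
  | succ p ih =>
    have hprev := ih (Nat.lt_of_succ_lt hp)
    have hletter := h.le_letter _ hp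
    have hstep := h.succ_le hp
    rw [greedyRows]
    split_ifs with hdesc
    · have := h.lt_of_descent p hp hdesc
      omega
    · omega

theorem isCompatible_greedyRows (h : IsCompatible l r) : IsCompatible l (greedyRows l) := by
  have hdrop (p : ℕ) (hp : p + 1 < l.length) (hdesc : l.getD (p + 1) 0 ≤ l.getD p 0) :
      greedyRows l (p + 1) < greedyRows l p := by
    have hpos := h.lt_of_descent p hp hdesc
    have hle := h.le_greedyRows (Nat.lt_of_succ_lt hp)
    rw [greedyRows, if_pos hdesc]
    omega
  refine ⟨antitoneOn_of_add_one_le Set.ordConnected_Iio fun p _ _ hp => ?_,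
    fun p _ => greedyRows_le_letter l p, hdrop⟩
  by_cases hdesc : l.getD (p + 1) 0 ≤ l.getD p 0
  · exact (hdrop p hp hdesc).le
  · simp only [greedyRows, if_neg hdesc, le_refl]

end IsCompatible

theorem isCompatible_iff_le_greedyRows {l : List ℕ} {r : ℕ → ℕ}
    (hl : IsCompatible l (greedyRows l)) (hr : AntitoneOn r (Set.Iio l.length)) :
    IsCompatible l r ↔ (∀ p, p < l.length → r p ≤ greedyRows l p) ∧
      ∀ p, p + 1 < l.length → greedyRows l (p + 1) < greedyRows l p → r (p + 1) < r p := by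
  constructor
  · exact fun h => ⟨fun p hp => h.le_greedyRows hp,
      fun p hp hlt => h.lt_of_descent p hp (descent_of_greedyRows_lt hlt)⟩
  · rintro ⟨hle, hdrop⟩
    exact ⟨hr, fun p hp => (hle p hp).trans (greedyRows_le_letter l p),
      fun p hp hdesc => hdrop p hp (hl.lt_of_descent p hp hdesc)⟩

/-- `P` is quasi-Yamanouchi: the westernmost cross of each row is in the first column or weakly
west of some cross in the row above. -/
def IsQuasiYamanouchi (P : Finset (ℕ × ℕ)) : Prop :=
  ∀ i j : ℕ, (i, j) ∈ P → (∀ j', (i, j') ∈ P → j ≤ j') →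
    (j = 0 ∨ ∃ j', (i + 1, j') ∈ P ∧ j ≤ j')

namespace IsCompatible

variable {l : List ℕ} {r : ℕ → ℕ}

theorem isQuasiYamanouchi_greedyRows (h : IsCompatible l r) (hne : l.IsChain (· ≠ ·)) :
    IsQuasiYamanouchi (ofRows l (greedyRows l)) := by
  intro i j hij hwest
  simp only [mem_ofRows] at hij hwest ⊢
  obtain ⟨q, hq, rfl, rfl⟩ := hij
  cases q with
  | zero => exact Or.inl (Nat.sub_self _)
  | succ p =>
    have hp : p < l.length := Nat.lt_of_succ_lt hq
    have hletters : l.getD p 0 ≠ l.getD (p + 1) 0 := by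
      simpa only [List.getD_eq_getElem _ _ hp, List.getD_eq_getElem _ _ hq] using
        List.isChain_iff_getElem.1 hne p hq
    have hle := greedyRows_le_letter l p
    rcases lt_or_ge (l.getD p 0) (l.getD (p + 1) 0) with hasc | hdesc
    · have hrow : greedyRows l (p + 1) = greedyRows l p := by
        rw [greedyRows, if_neg hasc.not_ge]
      have := hwest _ ⟨p, hp, hrow.symm, rfl⟩
      omega
    · have hdrop := h.isCompatible_greedyRows.lt_of_descent p hq hdesc
      have hrow : greedyRows l (p + 1) = min (l.getD (p + 1) 0) (greedyRows l p - 1) := by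
        rw [greedyRows, if_pos hdesc]
      rcases min_choice (l.getD (p + 1) 0) (greedyRows l p - 1) with hmin | hmin
      · exact Or.inl (by omega)
      · exact Or.inr ⟨_, ⟨p, hp, by omega, rfl⟩, by omega⟩

theorem row_eq_letter_or_exists (h : IsCompatible l r) (hQ : IsQuasiYamanouchi (ofRows l r))
    {q : ℕ} (hq : q < l.length) (hfirst : ∀ p < q, r p ≠ r q) :
    r q = l.getD q 0 ∨ ∃ p < q, r p = r q + 1 ∧ l.getD q 0 < l.getD p 0 := by
  have hletter := h.le_letter q hq
  have hwest : ∀ j', (r q, j') ∈ ofRows l r → l.getD q 0 - r q ≤ j' := by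
    intro j' hj'
    obtain ⟨p, hp, hrow, rfl⟩ := mem_ofRows.1 hj'
    have hqp : q ≤ p := not_lt.1 fun hpq => hfirst p hpq hrow
    have := h.add_le_of_row_eq hqp hp hrow.symm
    omega
  rcases hQ (r q) _ (mem_ofRows.2 ⟨q, hq, rfl, rfl⟩) hwest with hzero | ⟨j', hj', hle⟩
  · exact Or.inl (by omega)
  · obtain ⟨p, hp, hrow, rfl⟩ := mem_ofRows.1 hj'
    have hpq : p < q := by
      by_contra hqp
      have := h.antitoneOn hq hp (not_lt.1 hqp)
      omega
    have := h.le_letter p hp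
    exact Or.inr ⟨p, hpq, hrow, by omega⟩

theorem eq_greedyRows (h : IsCompatible l r) (hQ : IsQuasiYamanouchi (ofRows l r)) {p : ℕ}
    (hp : p < l.length) : r p = greedyRows l p := by
  induction p with
  | zero =>
    rcases h.row_eq_letter_or_exists hQ hp (by simp) with hletter | ⟨p, hp, -⟩
    · exact hletter
    · exact absurd hp p.not_lt_zero
  | succ p ih =>
    have hprev := ih (Nat.lt_of_succ_lt hp)
    have hstep := h.succ_le hp
    have hstep' := h.isCompatible_greedyRows.succ_le hp
    have hle := h.le_greedyRows hp
    have hletter := greedyRows_le_letter l (p + 1)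
    rcases hstep.eq_or_lt with heq | hlt
    · omega
    have hanti {q : ℕ} (hq : q < p + 1) : r p ≤ r q :=
      h.antitoneOn (hq.trans hp) (Nat.lt_of_succ_lt hp) (Nat.le_of_lt_succ hq)
    have hfirst : ∀ q < p + 1, r q ≠ r (p + 1) := fun q hq => (hlt.trans_le (hanti hq)).ne'
    rcases h.row_eq_letter_or_exists hQ hp hfirst with htop | ⟨q, hq, hrow, hdesc⟩
    · omega
    · have hrow_p := hanti hq
      have hadd := h.add_le_of_row_eq (Nat.le_of_lt_succ hq) (Nat.lt_of_succ_lt hp) (by omega)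
      have := h.isCompatible_greedyRows.lt_of_descent p hp (by omega)
      omega

end IsCompatible

/-- The destandardization of `P`: each row is pushed up as far as the reading word of `P`
allows. -/
def destandardize (P : Finset (ℕ × ℕ)) : Finset (ℕ × ℕ) :=
  ofRows (readWord P) (greedyRows (readWord P))

theorem isCompatible_greedyRows_readWord (P : Finset (ℕ × ℕ)) :
    IsCompatible (readWord P) (greedyRows (readWord P)) :=
  (isCompatible_rows P).isCompatible_greedyRows

theorem readWord_destandardize (P : Finset (ℕ × ℕ)) : readWord (destandardize P) = readWord P :=
  (isCompatible_greedyRows_readWord P).readWord_ofRows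

theorem destandardize_eq_self_of_isQuasiYamanouchi {P : Finset (ℕ × ℕ)} (hP : IsQuasiYamanouchi P) :
    destandardize P = P := by
  rw [← ofRows_rows P] at hP
  exact (ofRows_congr fun p hp => (isCompatible_rows P).eq_greedyRows hP hp).symm.trans
    (ofRows_rows P)

theorem destandardize_eq_iff {P Q : Finset (ℕ × ℕ)} (hQ : destandardize Q = Q) :
    destandardize P = Q ↔ readWord P = readWord Q := by
  constructor
  · rintro rfl
    exact (readWord_destandardize P).symm
  · intro h
    rw [destandardize, h, ← destandardize, hQ]

theorem isQPD_iff {w : Equiv.Perm ℕ} {P : Finset (ℕ × ℕ)} :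
    IsQPD w P ↔ IsPD w P ∧ destandardize P = P := by
  refine and_congr_right fun hP => ⟨destandardize_eq_self_of_isQuasiYamanouchi, fun h => ?_⟩
  rw [← h]
  exact (isCompatible_rows P).isQuasiYamanouchi_greedyRows hP.2.isChain_ne

theorem IsPD.of_readWord_eq {w : Equiv.Perm ℕ} {P Q : Finset (ℕ × ℕ)} (hP : IsPD w P)
    (h : readWord Q = readWord P) : IsPD w Q := by
  rwa [IsPD, h]

theorem IsPD.isQPD_destandardize {w : Equiv.Perm ℕ} {P : Finset (ℕ × ℕ)} (hP : IsPD w P) :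
    IsQPD w (destandardize P) := by
  refine isQPD_iff.2 ⟨hP.of_readWord_eq (readWord_destandardize P), ?_⟩
  rw [destandardize, readWord_destandardize, ← destandardize]

/-! ### Partial sums and refinement -/

section PartialSums

variable {n : ℕ}

theorem psum_eq_sum_take (a : Fin n → ℕ) (i : ℕ) : psum a i = ((List.ofFn a).take i).sum := by
  rw [List.sum_take_ofFn, psum]

theorem psum_mono (a : Fin n → ℕ) : Monotone (psum a) := by
  intro i j hij
  rw [psum_eq_sum_take, psum_eq_sum_take]
  exact (List.take_sublist_take_left hij).sum_le_sum (fun _ _ => Nat.zero_le _)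

theorem psum_zero (a : Fin n → ℕ) : psum a 0 = 0 := by
  simp [psum]

theorem psum_le_sum (a : Fin n → ℕ) (i : ℕ) : psum a i ≤ ∑ j, a j :=
  Finset.sum_le_sum_of_subset (Finset.filter_subset _ _)

theorem psum_of_le (a : Fin n → ℕ) {i : ℕ} (hi : n ≤ i) : psum a i = ∑ j, a j := by
  rw [psum, Finset.filter_true_of_mem fun j _ => j.2.trans_le hi]

theorem psum_succ (a : Fin n → ℕ) (i : Fin n) : psum a (i + 1) = psum a i + a i := by
  rw [psum_eq_sum_take, psum_eq_sum_take, List.sum_take_succ _ _ (by simp), List.getElem_ofFn]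

theorem psum_injective : Function.Injective (psum : (Fin n → ℕ) → ℕ → ℕ) := by
  intro a b hab
  funext i
  have hi := psum_succ a i
  rw [hab, psum_succ b i] at hi
  omega

end PartialSums

/-- The set of sums of initial segments of a list; for a composition of `m` it is the usual
subset of `{0, …, m}` encoding it. -/
def prefixSums (l : List ℕ) : Set ℕ := Set.range fun k => (l.take k).sum

theorem zero_mem_prefixSums (l : List ℕ) : 0 ∈ prefixSums l := ⟨0, rfl⟩

theorem le_sum_of_mem_prefixSums {l : List ℕ} {m : ℕ} (hm : m ∈ prefixSums l) : m ≤ l.sum := by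
  obtain ⟨k, rfl⟩ := hm
  exact (List.take_sublist k l).sum_le_sum fun _ _ => Nat.zero_le _

theorem prefixSums_nil : prefixSums [] = {0} := by
  simp [prefixSums]

theorem prefixSums_cons (x : ℕ) (l : List ℕ) :
    prefixSums (x :: l) = insert 0 ((x + ·) '' prefixSums l) := by
  ext m
  constructor
  · rintro ⟨_ | k, rfl⟩
    · exact Or.inl rfl
    · exact Or.inr ⟨_, ⟨k, rfl⟩, rfl⟩
  · rintro (rfl | ⟨_, ⟨k, rfl⟩, rfl⟩)
    · exact zero_mem_prefixSums _
    · exact ⟨k + 1, rfl⟩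

theorem prefixSums_append (l l' : List ℕ) :
    prefixSums (l ++ l') = prefixSums l ∪ (l.sum + ·) '' prefixSums l' := by
  induction l with
  | nil => simp [prefixSums_nil, zero_mem_prefixSums]
  | cons x l ih =>
    simp only [List.cons_append, prefixSums_cons, ih, Set.image_union, Set.insert_union,
      Set.image_image, List.sum_cons, add_assoc]

theorem prefixSums_filter_ne_zero (l : List ℕ) :
    prefixSums (l.filter (fun x => x ≠ 0)) = prefixSums l := by
  induction l with
  | nil => rfl
  | cons x l ih =>
    by_cases hx : x = 0
    · subst hx
      rw [prefixSums_cons]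
      simpa [zero_mem_prefixSums] using ih
    · simp only [ne_eq, hx, not_false_eq_true, decide_true, List.filter_cons_of_pos,
        prefixSums_cons]
      exact congrArg (fun s => insert 0 ((x + ·) '' s)) ih

theorem sum_filter_ne_zero (l : List ℕ) : (l.filter (fun x => x ≠ 0)).sum = l.sum := by
  induction l with
  | nil => rfl
  | cons x l ih => by_cases hx : x = 0 <;> simpa [hx] using ih

theorem prefixSums_map_sum_subset (L : List (List ℕ)) :
    prefixSums (L.map List.sum) ⊆ prefixSums L.flatten := by
  induction L with
  | nil => exact subset_rfl
  | cons B L ih =>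
    rw [List.map_cons, List.flatten_cons, prefixSums_cons, prefixSums_append]
    exact Set.insert_subset (Or.inl (zero_mem_prefixSums B))
      ((Set.image_mono ih).trans Set.subset_union_right)

theorem refines_of_prefixSums_subset {α β : List ℕ} (hβ : 0 ∉ β) (hsum : β.sum = α.sum)
    (hsub : prefixSums α ⊆ prefixSums β) : Refines β α := by
  induction α generalizing β with
  | nil =>
    have hnil : β = [] := List.eq_nil_iff_forall_not_mem.2 fun x hx =>
      hβ (List.sum_eq_zero_iff.1 hsum x hx ▸ hx)
    exact ⟨[], hnil.symm, rfl⟩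
  | cons x α ih =>
    obtain ⟨k, hk : (β.take k).sum = x⟩ := hsub (show x ∈ prefixSums (x :: α) from ⟨1, by simp⟩)
    have hsplit := List.take_append_drop k β
    have hdrop : Refines (β.drop k) α := by
      refine ih (fun h0 => hβ (List.mem_of_mem_drop h0)) ?_ fun m hm => ?_
      · rw [← hsplit, List.sum_append, hk, List.sum_cons] at hsum
        exact Nat.add_left_cancel hsum
      · have hmem := hsub (prefixSums_cons x α ▸ Or.inr ⟨m, hm, rfl⟩ : x + m ∈ _)
        rw [← hsplit, prefixSums_append, hk] at hmem
        rcases hmem with hmem | ⟨m', hm', heq⟩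
        · have hle := le_sum_of_mem_prefixSums hmem
          obtain rfl : m = 0 := by omega
          exact zero_mem_prefixSums _
        · exact Nat.add_left_cancel heq ▸ hm'
    obtain ⟨L, hL, hLα⟩ := hdrop
    exact ⟨β.take k :: L, by rw [List.flatten_cons, hL, hsplit],
      by rw [List.map_cons, hLα, hk]⟩

theorem refines_iff {α β : List ℕ} (hβ : 0 ∉ β) :
    Refines β α ↔ β.sum = α.sum ∧ prefixSums α ⊆ prefixSums β := by
  refine ⟨?_, fun h => refines_of_prefixSums_subset hβ h.1 h.2⟩
  rintro ⟨L, rfl, rfl⟩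
  exact ⟨List.sum_flatten, prefixSums_map_sum_subset L⟩

theorem prefixSums_flat {n : ℕ} (a : Fin n → ℕ) : prefixSums (flat a) = Set.range (psum a) := by
  rw [flat, prefixSums_filter_ne_zero, prefixSums]
  exact congrArg Set.range (funext fun i => (psum_eq_sum_take a i).symm)

theorem sum_flat {n : ℕ} (a : Fin n → ℕ) : (flat a).sum = ∑ i, a i := by
  rw [flat, sum_filter_ne_zero, List.sum_ofFn]

theorem refines_flat_iff {n : ℕ} {a b : Fin n → ℕ} :
    Refines (flat b) (flat a) ↔
      ∑ i, b i = ∑ i, a i ∧ Set.range (psum a) ⊆ Set.range (psum b) := by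
  rw [refines_iff (by simp [flat]), sum_flat, sum_flat, prefixSums_flat, prefixSums_flat]

/-! ### Weights of weakly decreasing sequences -/

/-- `r 0 ≥ r 1 ≥ ⋯ ≥ r (ℓ - 1)` with all values below `n`; values beyond `ℓ` are ignored. -/
structure IsRowSeq (n ℓ : ℕ) (r : ℕ → ℕ) : Prop where
  antitoneOn : AntitoneOn r (Set.Iio ℓ)
  lt : ∀ p, p < ℓ → r p < n

/-- The weak composition recording how often each value occurs among `r 0, …, r (ℓ - 1)`. -/
def content (n ℓ : ℕ) (r : ℕ → ℕ) : Fin n → ℕ :=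
  fun i => ((Finset.range ℓ).filter fun p => r p = i).card

section Content

variable {n ℓ : ℕ} {r s : ℕ → ℕ}

theorem psum_content (h : ∀ p, p < ℓ → r p < n) (i : ℕ) :
    psum (content n ℓ r) i = ((Finset.range ℓ).filter fun p => r p < i).card := by
  simp only [psum, content]
  rw [← Finset.card_biUnion]
  · congr 1
    ext p
    simp only [Finset.mem_biUnion, Finset.mem_filter, Finset.mem_univ, true_and,
      Finset.mem_range]
    constructor
    · rintro ⟨j, hj, hp, hrow⟩
      exact ⟨hp, hrow ▸ hj⟩
    · rintro ⟨hp, hi⟩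
      exact ⟨⟨r p, h p hp⟩, hi, hp, rfl⟩
  · intro j _ k _ hjk
    refine Finset.disjoint_left.2 fun p hp hq => hjk (Fin.ext ?_)
    exact (Finset.mem_filter.1 hp).2.symm.trans (Finset.mem_filter.1 hq).2

theorem sum_content (h : ∀ p, p < ℓ → r p < n) : ∑ i, content n ℓ r i = ℓ := by
  rw [← psum_of_le _ le_rfl, psum_content h,
    Finset.filter_true_of_mem fun p hp => h p (Finset.mem_range.1 hp), Finset.card_range]

namespace IsRowSeq

-- By monotonicity the positions with value below `i` form a final segment of `0, …, ℓ - 1`.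
theorem lt_iff_le_psum (h : IsRowSeq n ℓ r) {p : ℕ} (hp : p < ℓ) (i : ℕ) :
    r p < i ↔ ℓ - p ≤ psum (content n ℓ r) i := by
  rw [psum_content h.lt]
  constructor
  · intro hi
    rw [← Nat.card_Ico]
    refine Finset.card_le_card fun q hq => ?_
    obtain ⟨hpq, hq⟩ := Finset.mem_Ico.1 hq
    exact Finset.mem_filter.2 ⟨Finset.mem_range.2 hq, (h.antitoneOn hp hq hpq).trans_lt hi⟩
  · intro hcard
    by_contra hi
    have hsub : ((Finset.range ℓ).filter fun q => r q < i) ⊆ Finset.Ico (p + 1) ℓ := by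
      intro q hq
      obtain ⟨hq, hlt⟩ := Finset.mem_filter.1 hq
      rw [Finset.mem_range] at hq
      refine Finset.mem_Ico.2 ⟨?_, hq⟩
      by_contra hqp
      have := h.antitoneOn hq hp (Nat.le_of_lt_succ (not_le.1 hqp))
      omega
    have := Finset.card_le_card hsub
    rw [Nat.card_Ico] at this
    omega

theorem dominates_content_iff (hr : IsRowSeq n ℓ r) (hs : IsRowSeq n ℓ s) :
    Dominates (content n ℓ r) (content n ℓ s) ↔ ∀ p, p < ℓ → r p ≤ s p := by
  constructor
  · intro hdom p hp
    have hs' := (hs.lt_iff_le_psum hp (s p + 1)).1 (Nat.lt_succ_self _)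
    have hle := hdom ⟨s p + 1, Nat.succ_lt_succ (hs.lt p hp)⟩
    exact Nat.le_of_lt_succ ((hr.lt_iff_le_psum hp _).2 (hs'.trans hle))
  · intro hle i
    rw [psum_content hr.lt, psum_content hs.lt]
    refine Finset.card_le_card fun p hp => ?_
    obtain ⟨hp, hi⟩ := Finset.mem_filter.1 hp
    exact Finset.mem_filter.2 ⟨hp, (hle p (Finset.mem_range.1 hp)).trans_lt hi⟩

theorem eq_of_content_eq (hr : IsRowSeq n ℓ r) (hs : IsRowSeq n ℓ s)
    (h : content n ℓ r = content n ℓ s) {p : ℕ} (hp : p < ℓ) : r p = s p :=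
  le_antisymm ((hr.dominates_content_iff hs).1 (fun _ => h ▸ le_rfl) p hp)
    ((hs.dominates_content_iff hr).1 (fun _ => h ▸ le_rfl) p hp)

theorem mem_range_psum_content (h : IsRowSeq n ℓ r) {p : ℕ} (hp : p + 1 < ℓ) :
    ℓ - (p + 1) ∈ Set.range (psum (content n ℓ r)) ↔ r (p + 1) < r p := by
  have hp' : p < ℓ := Nat.lt_of_succ_lt hp
  constructor
  · rintro ⟨i, hi⟩
    have hlt := (h.lt_iff_le_psum hp i).2 hi.ge
    have hge := (h.lt_iff_le_psum hp' i).not.2 (by omega)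
    omega
  · intro hlt
    have hle := (h.lt_iff_le_psum hp (r p)).1 hlt
    have hge := (h.lt_iff_le_psum hp' (r p)).not.1 (lt_irrefl _)
    exact ⟨r p, by omega⟩

theorem refines_content_iff (hr : IsRowSeq n ℓ r) (hs : IsRowSeq n ℓ s) :
    Refines (flat (content n ℓ r)) (flat (content n ℓ s)) ↔
      ∀ p, p + 1 < ℓ → s (p + 1) < s p → r (p + 1) < r p := by
  rw [refines_flat_iff, sum_content hr.lt, sum_content hs.lt]
  constructor
  · rintro ⟨-, hsub⟩ p hp hdrop
    exact (hr.mem_range_psum_content hp).1 (hsub ((hs.mem_range_psum_content hp).2 hdrop))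
  · intro hdrop
    refine ⟨rfl, ?_⟩
    rintro _ ⟨i, rfl⟩
    rcases ((psum_le_sum _ i).trans_eq (sum_content hs.lt)).eq_or_lt with hfull | hlt
    · exact ⟨n, by rw [psum_of_le _ le_rfl, sum_content hr.lt, hfull]⟩
    rcases Nat.eq_zero_or_pos (psum (content n ℓ s) i) with hzero | hpos
    · exact ⟨0, by rw [hzero, psum_zero]⟩
    obtain ⟨p, hp⟩ : ∃ p, psum (content n ℓ s) i = ℓ - (p + 1) :=
      ⟨ℓ - psum (content n ℓ s) i - 1, by omega⟩
    have hpℓ : p + 1 < ℓ := by omega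
    rw [hp]
    exact (hr.mem_range_psum_content hpℓ).2
      (hdrop p hpℓ ((hs.mem_range_psum_content hpℓ).1 ⟨i, hp⟩))

end IsRowSeq

theorem exists_isRowSeq_content_eq (b : Fin n → ℕ) :
    ∃ r, IsRowSeq n (∑ i, b i) r ∧ content n (∑ i, b i) r = b := by
  set ℓ := ∑ i, b i
  have hfull (p : ℕ) : ℓ - p ≤ psum b n := by
    rw [psum_of_le b le_rfl]
    exact Nat.sub_le _ _
  have hex (p : ℕ) : ∃ i, ℓ - p ≤ psum b (i + 1) :=
    ⟨n, (hfull p).trans (psum_mono b n.le_succ)⟩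
  have hlt {p : ℕ} (hp : p < ℓ) (i : ℕ) : Nat.find (hex p) < i ↔ ℓ - p ≤ psum b i := by
    refine ⟨fun hi => (Nat.find_spec (hex p)).trans (psum_mono b hi), fun hi => ?_⟩
    cases i with
    | zero =>
      rw [psum_zero] at hi
      omega
    | succ i => exact Nat.lt_succ_of_le (Nat.find_min' (hex p) hi)
  have hrow : IsRowSeq n ℓ fun p => Nat.find (hex p) := by
    refine ⟨fun p _ q _ hpq => ?_, fun p hp => (hlt hp n).2 (hfull p)⟩
    exact Nat.find_mono fun i hi => (Nat.sub_le_sub_left hpq ℓ).trans hi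
  refine ⟨_, hrow, psum_injective (funext fun i => ?_)⟩
  rw [psum_content hrow.lt, Finset.filter_congr fun p hp => hlt (Finset.mem_range.1 hp) i]
  have hIco : ((Finset.range ℓ).filter fun p => ℓ - p ≤ psum b i) =
      Finset.Ico (ℓ - psum b i) ℓ := by
    ext p
    simp only [Finset.mem_filter, Finset.mem_range, Finset.mem_Ico]
    omega
  rw [hIco, Nat.card_Ico, Nat.sub_sub_self (psum_le_sum b i)]

end Content

theorem slideF_eq_sum {n : ℕ} {ι : Type*} {S : Finset ι} {f : ι → Fin n → ℕ} {a : Fin n → ℕ}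
    (hf : Set.BijOn f S {b | Dominates b a ∧ Refines (flat b) (flat a)}) :
    slideF a = ∑ x ∈ S, MvPolynomial.monomial (Finsupp.equivFunOnFinite.symm (f x)) 1 := by
  refine (Finset.sum_bij (fun x _ => f x) (fun x hx => ?_) (fun x hx y hy => hf.injOn hx hy)
    (fun b hb => ?_) fun _ _ => rfl).symm
  · have hmem := hf.mapsTo hx
    refine Finset.mem_filter.2 ⟨Fintype.mem_piFinset.2 fun i => ?_, hmem⟩
    rw [Finset.mem_range, ← (refines_flat_iff.1 hmem.2).1]
    exact Nat.lt_succ_of_le (Finset.single_le_sum (fun _ _ => Nat.zero_le _) (Finset.mem_univ i))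
  · obtain ⟨x, hx, hxb⟩ := hf.surjOn (Finset.mem_filter.1 hb).2
    exact ⟨x, hx, hxb⟩

/-! ### Pipe dreams with a given reading word -/

theorem IsCompatible.injOn {l : List ℕ} {r : ℕ → ℕ} (h : IsCompatible l r) :
    Set.InjOn (fun p => (r p, l.getD p 0 - r p)) (Finset.range l.length) := by
  intro p hp q hq hpq
  rw [Finset.mem_coe, Finset.mem_range] at hp hq
  obtain ⟨hrow, hcol⟩ := Prod.ext_iff.1 hpq
  dsimp only at hrow hcol
  have hlp := h.le_letter p hp
  have hlq := h.le_letter q hq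
  rcases le_total p q with hle | hle
  · have := h.add_le_of_row_eq hle hq hrow
    omega
  · have := h.add_le_of_row_eq hle hp hrow.symm
    omega

theorem IsCompatible.wtFin_ofRows {l : List ℕ} {r : ℕ → ℕ} (h : IsCompatible l r) (n : ℕ) :
    wtFin n (ofRows l r) = content n l.length r := by
  funext i
  rw [wtFin, rowWt, ofRows, Finset.filter_image, Finset.card_image_of_injOn, content]
  exact h.injOn.mono (Finset.coe_subset.2 (Finset.filter_subset _ _))

theorem wtFin_eq_content (n : ℕ) (P : Finset (ℕ × ℕ)) :
    wtFin n P = content n (readWord P).length (rows P) := by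
  rw [← (isCompatible_rows P).wtFin_ofRows, ofRows_rows]

theorem IsRowSeq.isCompatible_iff {n : ℕ} {l : List ℕ} {r : ℕ → ℕ}
    (hr : IsRowSeq n l.length r) (hl : IsCompatible l (greedyRows l))
    (hn : ∀ p, p < l.length → greedyRows l p < n) :
    IsCompatible l r ↔ Dominates (content n l.length r) (content n l.length (greedyRows l)) ∧
      Refines (flat (content n l.length r)) (flat (content n l.length (greedyRows l))) := by
  have hg : IsRowSeq n l.length (greedyRows l) := ⟨hl.antitoneOn, hn⟩
  rw [hr.dominates_content_iff hg, hr.refines_content_iff hg,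
    isCompatible_iff_le_greedyRows hl hr.antitoneOn]

theorem bijOn_wtFin_readWord {n : ℕ} {l : List ℕ} (hl : IsCompatible l (greedyRows l))
    (hn : ∀ p, p < l.length → greedyRows l p < n) :
    Set.BijOn (wtFin n) {P | readWord P = l}
      {b | Dominates b (content n l.length (greedyRows l)) ∧
        Refines (flat b) (flat (content n l.length (greedyRows l)))} := by
  have hrows : ∀ {P}, readWord P = l → IsCompatible l (rows P) ∧ IsRowSeq n l.length (rows P) ∧
      wtFin n P = content n l.length (rows P) := by
    rintro P rfl
    have hP := isCompatible_rows P
    exact ⟨hP, ⟨hP.antitoneOn, fun p hp => (hP.le_greedyRows hp).trans_lt (hn p hp)⟩,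
      wtFin_eq_content n P⟩
  refine ⟨fun P hP => ?_, fun P hP P' hP' heq => ?_, ?_⟩
  · obtain ⟨hc, hr, hwt⟩ := hrows hP
    rw [hwt]
    exact (hr.isCompatible_iff hl hn).1 hc
  · obtain ⟨-, hr, hwt⟩ := hrows hP
    obtain ⟨-, hr', hwt'⟩ := hrows hP'
    rw [hwt, hwt'] at heq
    rw [← ofRows_rows P, ← ofRows_rows P', show readWord P = l from hP,
      show readWord P' = l from hP']
    exact ofRows_congr fun p hp => hr.eq_of_content_eq hr' heq hp
  · rintro b ⟨hdom, href⟩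
    have hsum : ∑ i, b i = l.length := (refines_flat_iff.1 href).1.trans (sum_content hn)
    obtain ⟨r, hr, rfl⟩ : ∃ r, IsRowSeq n l.length r ∧ content n l.length r = b :=
      hsum ▸ exists_isRowSeq_content_eq b
    have hc := (hr.isCompatible_iff hl hn).2 ⟨hdom, href⟩
    exact ⟨ofRows l r, hc.readWord_ofRows, hc.wtFin_ofRows n⟩

/-! ### Pipe dreams of a given shape -/

theorem finite_setOf_isPD (w : Equiv.Perm ℕ) : {P : Finset (ℕ × ℕ) | IsPD w P}.Finite := by
  rcases Set.eq_empty_or_nonempty {P : Finset (ℕ × ℕ) | IsPD w P} with hempty | ⟨P₀, hP₀, -⟩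
  · rw [hempty]
    exact Set.finite_empty
  obtain ⟨N, hN⟩ := exists_forall_wordPerm_eq (readWord P₀)
  refine (Finset.range N ×ˢ Finset.range N).powerset.finite_toSet.subset fun P hP => ?_
  refine Finset.mem_coe.2 (Finset.mem_powerset.2 fun x hx => ?_)
  have hletter : x.1 + x.2 ∈ readWord P := by
    rw [readWord_eq_map]
    exact List.mem_map_of_mem (mem_readCells.2 hx)
  have := hP.2.add_one_lt_of_mem (fun i hi => by rw [hP.1, ← hP₀, hN i hi]) hletter
  simp only [Finset.mem_product, Finset.mem_range]
  omega

theorem IsReducedWord.head_lt {n k : ℕ} {l : List ℕ} (h : IsReducedWord (k :: l))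
    (hdes : ∀ i, n ≤ i → wordPerm (k :: l) i < wordPerm (k :: l) (i + 1)) : k < n :=
  not_le.1 fun hk => (hdes k hk).not_gt h.descent

theorem IsCompatible.row_lt {n : ℕ} {l : List ℕ} {r : ℕ → ℕ} (h : IsCompatible l r)
    (hred : IsReducedWord l) (hdes : ∀ i, n ≤ i → wordPerm l i < wordPerm l (i + 1)) {p : ℕ}
    (hp : p < l.length) : r p < n := by
  have h0 : 0 < l.length := Nat.zero_lt_of_lt hp
  have hrow : r p ≤ l.getD 0 0 := (h.antitoneOn h0 hp p.zero_le).trans (h.le_letter 0 h0)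
  cases l with
  | nil => exact absurd h0 (lt_irrefl _)
  | cons k l => exact hrow.trans_lt (hred.head_lt hdes)

theorem IsQPD.bijOn_wtFin {n : ℕ} {w : Equiv.Perm ℕ} {Q : Finset (ℕ × ℕ)} (hQ : IsQPD w Q)
    (hdes : ∀ i, n ≤ i → w i < w (i + 1)) :
    Set.BijOn (wtFin n) {P | IsPD w P ∧ destandardize P = Q}
      {b | Dominates b (wtFin n Q) ∧ Refines (flat b) (flat (wtFin n Q))} := by
  obtain ⟨⟨hw, hred⟩, hself⟩ := isQPD_iff.1 hQ
  have hl := isCompatible_greedyRows_readWord Q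
  have hfiber : {P | IsPD w P ∧ destandardize P = Q} = {P | readWord P = readWord Q} := by
    ext P
    rw [Set.mem_ofPred_eq, destandardize_eq_iff hself]
    exact and_iff_right_of_imp hQ.1.of_readWord_eq
  have hwt : wtFin n Q = content n (readWord Q).length (greedyRows (readWord Q)) := by
    rw [← hl.wtFin_ofRows, ← destandardize, hself]
  rw [hfiber, hwt]
  exact bijOn_wtFin_readWord hl fun p hp => hl.row_lt hred (hw ▸ hdes) hp

theorem schubert_eq_sum_fundamentalSlide_general (n : ℕ) (w : Equiv.Perm ℕ)
    (hdes : ∀ i : ℕ, n ≤ i → w i < w (i + 1)) :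
    SchubertPoly n w
      = ∑ᶠ P ∈ {P : Finset (ℕ × ℕ) | IsQPD w P}, slideF (wtFin n P) := by
  have hPD := finite_setOf_isPD w
  have hQPD : {P | IsQPD w P}.Finite := hPD.subset fun P hP => hP.1
  rw [SchubertPoly, finsum_mem_eq_finite_toFinset_sum _ hPD,
    finsum_mem_eq_finite_toFinset_sum _ hQPD,
    ← Finset.sum_fiberwise_of_maps_to (g := destandardize) (t := hQPD.toFinset)]
  · refine Finset.sum_congr rfl fun Q hQ => (slideF_eq_sum ?_).symm
    rw [Set.Finite.mem_toFinset] at hQ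
    simpa using hQ.bijOn_wtFin hdes
  · intro P hP
    rw [Set.Finite.mem_toFinset] at hP ⊢
    exact hP.isQPD_destandardize

/-- for a permutation `w` with no descents at or after position `n`,
`𝔖_w = Σ_{P ∈ QPD(w)} 𝔉_{wt(P)}`. -/
theorem schubert_eq_sum_fundamentalSlide (n : ℕ) (w : Equiv.Perm ℕ)
    (hfin : ∃ N, ∀ i, N ≤ i → w i = i)
    (hdes : ∀ i : ℕ, n ≤ i + 1 → w i < w (i + 1)) :
    SchubertPoly n w
      = ∑ᶠ P ∈ {P : Finset (ℕ × ℕ) | IsQPD w P}, slideF (wtFin n P) :=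
  schubert_eq_sum_fundamentalSlide_general n w fun i hi => hdes i (hi.trans i.le_succ)

end SlidePaper
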